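/- arXiv:1503.02937 — 2 statements merged into one kernel-verified Lean document; each statement's English description precedes it below -/
import Mathlib

section
/- The projective Hjelmslev plane PHG(2, ℤ/4ℤ) contains exactly 256 hyperovals. -/
/-- A point of a projective Hjelmslev geometry PHG(n-1, R): a free rank-1 submodule
of Rⁿ, i.e. the R-span of a vector having at least one unit coordinate. -/
def IsPoint {R : Type} [CommRing R] {n : ℕ} (P : Submodule R (Fin n → R)) : Prop :=
  ∃ v : Fin n → R, (∃ i, IsUnit (v i)) ∧ P = Submodule.span R {v}

/-- A free rank-k submodule of Rⁿ: a submodule linearly isomorphic to Rᵏ. -/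
def IsFreeRank {R : Type} [CommRing R] {n : ℕ} (k : ℕ) (L : Submodule R (Fin n → R)) : Prop :=
  Nonempty ((Fin k → R) ≃ₗ[R] L)

/-- A line of PHG(2, R): a free rank-2 submodule of R³. -/
abbrev IsLine {R : Type} [CommRing R] (L : Submodule R (Fin 3 → R)) : Prop := IsFreeRank 2 L

/-- A hyperoval of PHG(2, R), |R| = 4: a set of 7 points with at most 2 points on each line. -/
def IsHyperoval {R : Type} [CommRing R] (H : Set (Submodule R (Fin 3 → R))) : Prop :=
  (∀ P ∈ H, IsPoint P) ∧ H.ncard = 7 ∧ ∀ L, IsLine L → {P ∈ H | P ≤ L}.ncard ≤ 2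

abbrev R4 := ZMod 4

/-!
Count incidences on the six lines through a point `P` of a hyperoval `H`: each line carries at most
one further point of `H`, a point not neighbouring `P` lies on one of these lines and a neighbour of
`P` on two. As `H` has six further points, none of them is a neighbour of `P`, so reduction modulo 2
maps `H` bijectively onto the Fano plane. Hence a hyperoval is a section of this reduction in which
no three points over the same Fano line are collinear.

A matrix congruent to 1 modulo 2 moves the four points over (1,0,0), (0,1,0), (0,0,1), (1,1,1) to
those same vectors read over ℤ/4ℤ. Each of the other three Fano points lies on two Fano lines
through pairs of this frame, and noncollinearity along these two lines determines the point above
it. Therefore hyperovals correspond to the `2 ^ 9` matrices congruent to 1 modulo 2, up to sign.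
-/

open Finset Matrix Submodule

section CommRing

variable {R : Type*} [CommRing R]

/-- The hyperplane of `Rⁿ` with coordinate vector `h`. It is a line of PHG(2, R) if `n = 3` and `h`
has a unit coordinate, see `isLine_hyperplane`. -/
def hyperplane {n : Type*} [Fintype n] (h : n → R) : Submodule R (n → R) :=
  LinearMap.ker (dotProductBilin R R h)

theorem mem_hyperplane {n : Type*} [Fintype n] {h x : n → R} : x ∈ hyperplane h ↔ h ⬝ᵥ x = 0 :=
  Iff.rfl

theorem span_singleton_le_hyperplane {n : Type*} [Fintype n] {h x : n → R} :
    span R {x} ≤ hyperplane h ↔ h ⬝ᵥ x = 0 :=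
  (span_singleton_le_iff_mem _ _).trans mem_hyperplane

theorem cross_dot_eq (u v w : Fin 3 → R) :
    u ⨯₃ v ⬝ᵥ w =
      (u 1 * v 2 - u 2 * v 1) * w 0 + (u 2 * v 0 - u 0 * v 2) * w 1 +
        (u 0 * v 1 - u 1 * v 0) * w 2 := by
  simp [cross_apply, dotProduct, Fin.sum_univ_three]

theorem cross_dot_smul (u v w t : Fin 3 → R) :
    (u ⨯₃ v ⬝ᵥ t) • w =
      (w ⨯₃ v ⬝ᵥ t) • u + (u ⨯₃ w ⬝ᵥ t) • v + (u ⨯₃ v ⬝ᵥ w) • t := by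
  ext i
  fin_cases i <;> simp [cross_dot_eq] <;> ring

theorem linearIndependent_pair_of_cross_dot_eq_one {a b t : Fin 3 → R} (ht : a ⨯₃ b ⬝ᵥ t = 1) :
    LinearIndependent R ![a, b] := by
  refine LinearIndependent.pair_iff.2 fun s r h => ?_
  have hs : (s • a + r • b) ⨯₃ b ⬝ᵥ t = s := by simp [ht]
  have hr : a ⨯₃ (s • a + r • b) ⬝ᵥ t = r := by simp [ht]
  rw [h] at hs hr
  exact ⟨by simpa using hs.symm, by simpa using hr.symm⟩

theorem span_pair_eq_hyperplane_cross {a b t : Fin 3 → R} (ht : a ⨯₃ b ⬝ᵥ t = 1) :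
    span R {a, b} = hyperplane (a ⨯₃ b) := by
  refine le_antisymm (span_le.2 ?_) fun w hw => mem_span_pair.2 ⟨w ⨯₃ b ⬝ᵥ t, a ⨯₃ w ⬝ᵥ t, ?_⟩
  · rintro x (rfl | rfl) <;> simp [mem_hyperplane, dotProduct_comm (_ ⨯₃ _)]
  · simpa [ht, mem_hyperplane.1 hw] using (cross_dot_smul a b w t).symm

theorem exists_cross_eq {h : Fin 3 → R} {i : Fin 3} (hi : IsUnit (h i)) :
    ∃ a b, a ⨯₃ b = h := by
  obtain ⟨c, hc⟩ := hi.exists_left_inv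
  match i, hc with
  | 0, hc =>
    refine ⟨![-h 1, h 0, 0], ![-c * h 2, 0, 1], ?_⟩
    ext j
    fin_cases j <;> simp [cross_apply]
    linear_combination h 2 * hc
  | 1, hc =>
    refine ⟨![0, -h 2, h 1], ![1, -c * h 0, 0], ?_⟩
    ext j
    fin_cases j <;> simp [cross_apply]
    linear_combination h 0 * hc
  | 2, hc =>
    refine ⟨![h 2, 0, -h 0], ![0, 1, -c * h 1], ?_⟩
    ext j
    fin_cases j <;> simp [cross_apply]
    linear_combination h 1 * hc

theorem cross_dot_ne_zero_of_eq_or_eq_neg {a b a' b' w : Fin 3 → R} (ha : a' = a ∨ a' = -a)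
    (hb : b' = b ∨ b' = -b) (h : a' ⨯₃ b' ⬝ᵥ w ≠ 0) : a ⨯₃ b ⬝ᵥ w ≠ 0 := by
  rcases ha with rfl | rfl <;> rcases hb with rfl | rfl <;>
    simpa only [map_neg, LinearMap.neg_apply, neg_dotProduct, neg_neg, neg_ne_zero] using h

theorem mulVec_cross_mulVec_dot (M : Matrix (Fin 3) (Fin 3) R) (u v w : Fin 3 → R) :
    (M *ᵥ u) ⨯₃ (M *ᵥ v) ⬝ᵥ (M *ᵥ w) = M.det * (u ⨯₃ v ⬝ᵥ w) := by
  simp only [cross_dot_eq]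
  simp only [mulVec, dotProduct, Fin.sum_univ_three, det_fin_three]
  ring

theorem eq_one_or_eq_neg_one_of_mulVec_frame {n : Type*} [Fintype n] [DecidableEq n]
    {N : Matrix n n R}
    (hsingle : ∀ j, N *ᵥ Pi.single j 1 = Pi.single j 1 ∨ N *ᵥ Pi.single j 1 = -Pi.single j 1)
    (hone : N *ᵥ 1 = 1 ∨ N *ᵥ 1 = -1) : N = 1 ∨ N = -1 := by
  have hoff : ∀ i j, i ≠ j → N i j = 0 := by
    intro i j hij
    have hcol : N i j = (N *ᵥ Pi.single j 1) i := by simp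
    rcases hsingle j with h | h <;> simp [hcol, h, hij]
  have hdiag : N = diagonal (N *ᵥ 1) := by
    ext i j
    rcases eq_or_ne i j with rfl | hij
    · simp [mulVec, dotProduct, Finset.sum_eq_single i fun k _ hk => hoff i k hk.symm]
    · rw [hoff i j hij, diagonal_apply_ne _ hij]
  refine hone.imp (fun h => ?_) fun h => ?_ <;> rw [hdiag, h]
  · exact diagonal_one
  · rw [← diagonal_one, diagonal_neg]
    rfl

end CommRing

section Incidence

variable {R : Type} [CommRing R]

theorem isLine_hyperplane {h : Fin 3 → R} {i : Fin 3} (hi : IsUnit (h i)) :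
    IsLine (hyperplane h) := by
  obtain ⟨a, b, rfl⟩ := exists_cross_eq hi
  obtain ⟨c, hc⟩ := hi.exists_right_inv
  have ht : a ⨯₃ b ⬝ᵥ Pi.single i c = 1 := by simpa using hc
  rw [← span_pair_eq_hyperplane_cross ht, ← range_cons_cons_empty]
  exact ⟨(Module.Basis.span (linearIndependent_pair_of_cross_dot_eq_one ht)).equivFun.symm⟩

theorem IsLine.cross_dot_eq_zero {L : Submodule R (Fin 3 → R)} (hL : IsLine L)
    {u v w : Fin 3 → R} (hu : u ∈ L) (hv : v ∈ L) (hw : w ∈ L) : u ⨯₃ v ⬝ᵥ w = 0 := by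
  obtain ⟨e⟩ := hL
  have hcoords : ∀ x ∈ L, ∃ s t : R, x = s • (e ![1, 0] : Fin 3 → R) + t • e ![0, 1] := by
    intro x hx
    obtain ⟨c, hc⟩ := e.surjective ⟨x, hx⟩
    have hsum : c = c 0 • ![1, 0] + c 1 • ![0, 1] := by ext j; fin_cases j <;> simp
    refine ⟨c 0, c 1, ?_⟩
    rw [hsum, map_add, map_smul, map_smul] at hc
    simpa using (congrArg Subtype.val hc).symm
  obtain ⟨s₁, t₁, rfl⟩ := hcoords u hu
  obtain ⟨s₂, t₂, rfl⟩ := hcoords v hv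
  obtain ⟨s₃, t₃, rfl⟩ := hcoords w hw
  simp only [cross_dot_eq, Pi.add_apply, Pi.smul_apply, smul_eq_mul]
  ring

theorem IsHyperoval.eq_or_eq_or_eq {H : Set (Submodule R (Fin 3 → R))} (hH : IsHyperoval H)
    {L P Q S : Submodule R (Fin 3 → R)} (hL : IsLine L) (hP : P ∈ H) (hQ : Q ∈ H) (hS : S ∈ H)
    (hPL : P ≤ L) (hQL : Q ≤ L) (hSL : S ≤ L) : P = Q ∨ P = S ∨ Q = S := by
  by_contra! hne
  have hfin : H.Finite := Set.finite_of_ncard_ne_zero (by simp [hH.2.1])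
  have hthree : 2 < {P ∈ H | P ≤ L}.ncard := (Set.two_lt_ncard (hfin.sep _)).2
    ⟨P, ⟨hP, hPL⟩, Q, ⟨hQ, hQL⟩, S, ⟨hS, hSL⟩, hne⟩
  exact (hH.2.2 L hL).not_gt hthree

end Incidence

/-- Reduction modulo 2, from ℤ/4ℤ to its residue field. -/
def red : R4 →+* ZMod 2 :=
  ZMod.castHom (by decide : 2 ∣ 4) (ZMod 2)

/-- Reduction modulo 2 of a coordinate vector. Two points are neighbours when their coordinate
vectors have the same reduction, and the nonzero values are the points of the Fano plane. -/
def reduce {ι : Type*} (v : ι → R4) : ι → ZMod 2 :=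
  red ∘ v

theorem isUnit_iff_red_ne_zero : ∀ {x : R4}, IsUnit x ↔ red x ≠ 0 := by
  decide

theorem eq_one_or_eq_neg_one_of_red_eq_one : ∀ {x : R4}, red x = 1 → x = 1 ∨ x = -1 := by
  decide

theorem exists_isUnit_iff_reduce_ne_zero {ι : Type*} {v : ι → R4} :
    (∃ i, IsUnit (v i)) ↔ reduce v ≠ 0 := by
  simp [isUnit_iff_red_ne_zero, Function.ne_iff, reduce]

theorem reduce_neg {ι : Type*} (v : ι → R4) : reduce (-v) = reduce v := by
  ext i
  simp [reduce, ZMod.neg_eq_self_mod_two]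

theorem reduce_cross (u v : Fin 3 → R4) : reduce (u ⨯₃ v) = reduce u ⨯₃ reduce v := by
  ext i
  fin_cases i <;> simp [reduce, cross_apply]

theorem reduce_mulVec {ι : Type*} [Fintype ι] [DecidableEq ι] {M : Matrix ι ι R4}
    (hM : M.map red = 1) (v : ι → R4) : reduce (M *ᵥ v) = reduce v := by
  ext i
  simp [reduce, RingHom.map_mulVec, hM]

theorem span_singleton_eq_iff {ι : Type*} {u v : ι → R4} (hv : reduce v ≠ 0) :
    span R4 {v} = span R4 {u} ↔ v = u ∨ v = -u := by
  constructor
  · intro h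
    obtain ⟨c, rfl⟩ := mem_span_singleton.1 (h ▸ mem_span_singleton_self v)
    obtain ⟨i, hi⟩ := exists_isUnit_iff_reduce_ne_zero.2 hv
    have hc : red c ≠ 0 := isUnit_iff_red_ne_zero.1 (isUnit_of_mul_isUnit_left hi)
    rcases eq_one_or_eq_neg_one_of_red_eq_one (Fin.eq_one_of_ne_zero _ hc) with rfl | rfl <;> simp
  · rintro (rfl | rfl) <;> simp [← Set.neg_singleton]

theorem reduce_eq_of_span_eq {ι : Type*} {u v : ι → R4} (hv : reduce v ≠ 0)
    (h : span R4 {v} = span R4 {u}) : reduce v = reduce u := by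
  rcases (span_singleton_eq_iff hv).1 h with rfl | rfl
  · rfl
  · exact reduce_neg u

theorem mul_self_eq_one_of_map_red_eq_one {ι : Type*} [Fintype ι] [DecidableEq ι]
    {M : Matrix ι ι R4} (hM : M.map red = 1) : M * M = 1 := by
  have hlift : ∀ a b : R4, red a = red b → ∃ n, a = b + n + n := by decide
  have hdouble : ∃ N, M = 1 + N + N := by
    choose N hN using fun i j => hlift (M i j) ((1 : Matrix ι ι R4) i j) <| by
      have h := congrFun₂ hM i j
      rw [map_apply] at h
      rw [h, one_apply, one_apply]
      split_ifs <;> simp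
    exact ⟨of N, ext hN⟩
  obtain ⟨N, rfl⟩ := hdouble
  have hfour : ∀ A : Matrix ι ι R4, (4 : ℕ) • A = 0 := fun A => by
    ext i j
    rw [Matrix.smul_apply, nsmul_eq_mul, (by decide : ((4 : ℕ) : R4) = 0), zero_mul,
      Matrix.zero_apply]
  calc (1 + N + N) * (1 + N + N) = 1 + (4 : ℕ) • N + (4 : ℕ) • (N * N) := by noncomm_ring
    _ = 1 := by simp only [hfour, add_zero]

theorem isPoint_iff {n : ℕ} {P : Submodule R4 (Fin n → R4)} :
    IsPoint P ↔ ∃ v, reduce v ≠ 0 ∧ P = span R4 {v} := by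
  simp only [IsPoint, exists_isUnit_iff_reduce_ne_zero]

theorem reduce_ne_zero_of_isPoint {n : ℕ} {v : Fin n → R4} (h : IsPoint (span R4 {v})) :
    reduce v ≠ 0 := by
  obtain ⟨w, hw, hvw⟩ := isPoint_iff.1 h
  exact reduce_eq_of_span_eq hw hvw.symm ▸ hw

theorem isLine_hyperplane_of_reduce_ne_zero {h : Fin 3 → R4} (hh : reduce h ≠ 0) :
    IsLine (hyperplane h) :=
  let ⟨_, hi⟩ := exists_isUnit_iff_reduce_ne_zero.2 hh
  isLine_hyperplane hi

theorem ncard_compl_singleton_zero : ({0}ᶜ : Set (Fin 3 → ZMod 2)).ncard = 7 := by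
  simp [Set.ncard_eq_toFinset_card', Finset.card_compl]

theorem cross_ne_zero :
    ∀ {p q : Fin 3 → ZMod 2}, p ≠ 0 → q ≠ 0 → p ≠ q → p ⨯₃ q ≠ 0 := by
  decide +kernel

theorem eq_or_eq_add_of_cross_dot_eq_zero {p q r : Fin 3 → ZMod 2} (hp : p ≠ 0) (hq : q ≠ 0)
    (hpq : p ≠ q) (h : p ⨯₃ q ⬝ᵥ r = 0) : r = 0 ∨ r = p ∨ r = q ∨ r = p + q := by
  obtain ⟨i, hi⟩ := Function.ne_iff.1 (cross_ne_zero hp hq hpq)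
  have hone : p ⨯₃ q ⬝ᵥ Pi.single i 1 = 1 := by
    rw [dotProduct_single_one]
    exact Fin.eq_one_of_ne_zero _ hi
  have hr : r ∈ span (ZMod 2) {p, q} := span_pair_eq_hyperplane_cross hone ▸ mem_hyperplane.2 h
  obtain ⟨s, t, rfl⟩ := mem_span_pair.1 hr
  have hcases : ∀ a : ZMod 2, a = 0 ∨ a = 1 := by decide
  rcases hcases s with rfl | rfl <;> rcases hcases t with rfl | rfl <;> simp

/-- Coordinate vectors of the lines through the point `⟨u⟩`. Every line occurs twice, as `h` and
as `-h`. -/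
def linesThrough (u : Fin 3 → R4) : Finset (Fin 3 → R4) :=
  {h | reduce h ≠ 0 ∧ h ⬝ᵥ u = 0}

theorem mem_linesThrough {u h : Fin 3 → R4} :
    h ∈ linesThrough u ↔ reduce h ≠ 0 ∧ h ⬝ᵥ u = 0 := by
  simp [linesThrough]

theorem card_linesThrough : ∀ {u : Fin 3 → R4}, reduce u ≠ 0 → #(linesThrough u) = 12 := by
  decide +kernel

theorem card_linesThrough_filter_of_reduce_eq : ∀ {u v : Fin 3 → R4}, reduce u ≠ 0 →
    reduce u = reduce v → u ≠ v → u ≠ -v → #{h ∈ linesThrough u | h ⬝ᵥ v = 0} = 4 := by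
  decide +kernel

theorem two_le_card_linesThrough_filter {u v : Fin 3 → R4} (hu : reduce u ≠ 0)
    (hv : reduce v ≠ 0) (huv : reduce u ≠ reduce v) :
    2 ≤ #{h ∈ linesThrough u | h ⬝ᵥ v = 0} := by
  have hne : reduce (u ⨯₃ v) ≠ 0 := reduce_cross u v ▸ cross_ne_zero hu hv huv
  have hne_neg : u ⨯₃ v ≠ -(u ⨯₃ v) := by
    intro h
    refine hne (funext fun i => ?_)
    have htorsion : ∀ x : R4, x = -x → red x = 0 := by decide
    exact htorsion _ (congrFun h i)
  have hu₀ : u ⨯₃ v ⬝ᵥ u = 0 := by rw [dotProduct_comm, dot_self_cross]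
  have hv₀ : u ⨯₃ v ⬝ᵥ v = 0 := by rw [dotProduct_comm, dot_cross_self]
  rw [← card_pair hne_neg]
  refine card_le_card fun h hh => mem_filter.2 ?_
  rcases mem_insert.1 hh with rfl | hh
  · exact ⟨mem_linesThrough.2 ⟨hne, hu₀⟩, hv₀⟩
  · obtain rfl := mem_singleton.1 hh
    exact ⟨mem_linesThrough.2 ⟨reduce_neg (u ⨯₃ v) ▸ hne, by rw [neg_dotProduct, hu₀, neg_zero]⟩,
      by rw [neg_dotProduct, hv₀, neg_zero]⟩

namespace IsHyperoval

variable {H : Set (Submodule R4 (Fin 3 → R4))}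

theorem reduce_ne_zero (hH : IsHyperoval H) {v : Fin 3 → R4} (hv : span R4 {v} ∈ H) :
    reduce v ≠ 0 :=
  reduce_ne_zero_of_isPoint (hH.1 _ hv)

open Classical in
theorem sum_card_linesThrough_le
    (hH : IsHyperoval H) {u : Fin 3 → R4} (hu : span R4 {u} ∈ H)
    {S : Finset (Submodule R4 (Fin 3 → R4))} (hS : ∀ Q ∈ S, Q ∈ H ∧ Q ≠ span R4 {u}) :
    ∑ Q ∈ S, #{h ∈ linesThrough u | Q ≤ hyperplane h} ≤ 12 := by
  calc ∑ Q ∈ S, #{h ∈ linesThrough u | Q ≤ hyperplane h}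
      = ∑ h ∈ linesThrough u, #{Q ∈ S | Q ≤ hyperplane h} :=
        sum_card_bipartiteAbove_eq_sum_card_bipartiteBelow fun Q h => Q ≤ hyperplane h
    _ ≤ ∑ h ∈ linesThrough u, 1 := by
        refine sum_le_sum fun h hh => card_le_one.2 fun Q hQ T hT => ?_
        obtain ⟨hh, hhu⟩ := mem_linesThrough.1 hh
        obtain ⟨hQ, hQh⟩ := mem_filter.1 hQ
        obtain ⟨hT, hTh⟩ := mem_filter.1 hT
        have huh := span_singleton_le_hyperplane.2 hhu
        rcases hH.eq_or_eq_or_eq (isLine_hyperplane_of_reduce_ne_zero hh) hu (hS Q hQ).1 (hS T hT).1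
          huh hQh hTh with h | h | h
        · exact absurd h.symm (hS Q hQ).2
        · exact absurd h.symm (hS T hT).2
        · exact h
    _ = 12 := by rw [← card_eq_sum_ones, card_linesThrough (hH.reduce_ne_zero hu)]

theorem span_eq_of_reduce_eq
    (hH : IsHyperoval H) {u v : Fin 3 → R4} (hu : span R4 {u} ∈ H) (hv : span R4 {v} ∈ H)
    (huv : reduce u = reduce v) : span R4 {u} = span R4 {v} := by
  classical
  by_contra hne
  have hu₀ := hH.reduce_ne_zero hu
  obtain ⟨hsame, hneg⟩ := not_or.1 (mt (span_singleton_eq_iff hu₀).2 hne)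
  have hfin : H.Finite := Set.finite_of_ncard_ne_zero (by simp [hH.2.1])
  set others := hfin.toFinset.erase (span R4 {u})
  have hothers : ∀ Q ∈ others, Q ∈ H ∧ Q ≠ span R4 {u} := by simp +contextual [others]
  have hvmem : span R4 {v} ∈ others := by simp [others, hv, Ne.symm hne]
  have hcard : #(others.erase (span R4 {v})) = 5 := by
    rw [card_erase_of_mem hvmem, card_erase_of_mem (by simpa), ← Set.ncard_eq_toFinset_card, hH.2.1]
  have hfour : #{h ∈ linesThrough u | span R4 {v} ≤ hyperplane h} = 4 := by
    simpa only [span_singleton_le_hyperplane] using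
      card_linesThrough_filter_of_reduce_eq hu₀ huv hsame hneg
  have htwo : ∀ Q ∈ others, 2 ≤ #{h ∈ linesThrough u | Q ≤ hyperplane h} := by
    intro Q hQ
    obtain ⟨hQH, hQu⟩ := hothers Q hQ
    obtain ⟨w, hw, rfl⟩ := isPoint_iff.1 (hH.1 Q hQH)
    simp only [span_singleton_le_hyperplane]
    by_cases huw : reduce u = reduce w
    · obtain ⟨hsame, hneg⟩ := not_or.1 (mt (span_singleton_eq_iff hu₀).2 hQu.symm)
      simp [card_linesThrough_filter_of_reduce_eq hu₀ huw hsame hneg]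
    · exact two_le_card_linesThrough_filter hu₀ hw huw
  have hrest := card_nsmul_le_sum (others.erase (span R4 {v})) _ 2
    fun Q hQ => htwo Q (mem_of_mem_erase hQ)
  have htotal := hH.sum_card_linesThrough_le hu hothers
  rw [← add_sum_erase _ _ hvmem, hfour] at htotal
  simp only [hcard, smul_eq_mul] at hrest
  omega

theorem exists_reduce_eq (hH : IsHyperoval H) {p : Fin 3 → ZMod 2} (hp : p ≠ 0) :
    ∃ v, reduce v = p ∧ span R4 {v} ∈ H := by
  choose gen hgen₀ hgen using fun P : H => isPoint_iff.1 (hH.1 P P.2)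
  have hmem : ∀ P, span R4 {gen P} ∈ H := fun P => hgen P ▸ P.2
  have hinj : Function.Injective (reduce ∘ gen) := fun P Q h =>
    Subtype.ext <| (hgen P).trans <|
      (hH.span_eq_of_reduce_eq (hmem P) (hmem Q) h).trans (hgen Q).symm
  have hrange : Set.range (reduce ∘ gen) = {0}ᶜ := by
    refine Set.eq_of_subset_of_ncard_le (Set.range_subset_iff.2 hgen₀) ?_
    have hseven : (Set.range (reduce ∘ gen)).ncard = 7 := by
      rw [← Set.image_univ, Set.ncard_image_of_injective _ hinj, Set.ncard_univ,
        Nat.card_coe_set_eq, hH.2.1]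
    rw [hseven, ncard_compl_singleton_zero]
  obtain ⟨P, rfl⟩ : p ∈ Set.range (reduce ∘ gen) := hrange ▸ hp
  exact ⟨gen P, rfl, hmem P⟩

end IsHyperoval

/-- A choice `x p` of a point of PHG(2, ℤ/4ℤ) over each point `p` of the Fano plane, no three over
the same Fano line being collinear. Points are given by coordinate vectors, `x 0` is junk, and
`p + q` is the third point of the Fano line through `p` and `q`. -/
structure IsArcSection (x : (Fin 3 → ZMod 2) → Fin 3 → R4) : Prop where
  reduce_eq : ∀ p ≠ 0, reduce (x p) = p
  cross_dot_ne_zero : ∀ p q, p ≠ 0 → q ≠ 0 → p ≠ q → x p ⨯₃ x q ⬝ᵥ x (p + q) ≠ 0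

/-- The set of points with coordinate vectors `x p`, for `p` a point of the Fano plane. -/
def pointSet (x : (Fin 3 → ZMod 2) → Fin 3 → R4) : Set (Submodule R4 (Fin 3 → R4)) :=
  (fun p => span R4 {x p}) '' {0}ᶜ

theorem pointSet_congr {x y : (Fin 3 → ZMod 2) → Fin 3 → R4}
    (h : ∀ p ≠ 0, span R4 {x p} = span R4 {y p}) : pointSet x = pointSet y :=
  Set.image_congr h

theorem eq_or_eq_neg_of_pointSet_subset {x y : (Fin 3 → ZMod 2) → Fin 3 → R4}
    (hx : ∀ p ≠ 0, reduce (x p) = p) (hy : ∀ p ≠ 0, reduce (y p) = p)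
    (h : pointSet x ⊆ pointSet y) {p : Fin 3 → ZMod 2} (hp : p ≠ 0) :
    x p = y p ∨ x p = -y p := by
  obtain ⟨q, hq, hqp⟩ := h ⟨p, hp, rfl⟩
  have hxy := (span_singleton_eq_iff (by rwa [hx p hp])).1 hqp.symm
  have hpq : p = q := by
    rw [← hx p hp, ← hy q hq]
    exact reduce_eq_of_span_eq (by rwa [hx p hp]) hqp.symm
  rwa [hpq] at hxy ⊢

theorem IsHyperoval.exists_isArcSection {H : Set (Submodule R4 (Fin 3 → R4))}
    (hH : IsHyperoval H) : ∃ x, IsArcSection x ∧ pointSet x = H := by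
  choose! x hx hxH using fun p (hp : p ≠ 0) => hH.exists_reduce_eq hp
  refine ⟨x, ⟨hx, fun p q hp hq hpq h => ?_⟩, ?_⟩
  · have hpq₀ : p + q ≠ 0 := CharTwo.add_eq_zero.not.2 hpq
    have hline : IsLine (hyperplane (x p ⨯₃ x q)) := isLine_hyperplane_of_reduce_ne_zero <| by
      rw [reduce_cross, hx p hp, hx q hq]
      exact cross_ne_zero hp hq hpq
    have hinj : ∀ r s, r ≠ 0 → s ≠ 0 → span R4 {x r} = span R4 {x s} → r = s := by
      intro r s hr hs hrs
      rw [← hx r hr, ← hx s hs]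
      exact reduce_eq_of_span_eq (hH.reduce_ne_zero (hxH r hr)) hrs
    rcases hH.eq_or_eq_or_eq hline (hxH p hp) (hxH q hq) (hxH _ hpq₀)
      (span_singleton_le_hyperplane.2 (by rw [dotProduct_comm, dot_self_cross]))
      (span_singleton_le_hyperplane.2 (by rw [dotProduct_comm, dot_cross_self]))
      (span_singleton_le_hyperplane.2 h) with h | h | h
    · exact hpq (hinj p q hp hq h)
    · exact hq (left_eq_add.1 (hinj p _ hp hpq₀ h))
    · exact hp (right_eq_add.1 (hinj q _ hq hpq₀ h))
  · refine Set.Subset.antisymm (Set.image_subset_iff.2 hxH) fun P hP => ?_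
    obtain ⟨v, hv, rfl⟩ := isPoint_iff.1 (hH.1 P hP)
    exact ⟨reduce v, hv, hH.span_eq_of_reduce_eq (hxH _ hv) hP (hx _ hv)⟩

namespace IsArcSection

variable {x : (Fin 3 → ZMod 2) → Fin 3 → R4}

theorem injOn_span (hx : IsArcSection x) : Set.InjOn (fun p => span R4 {x p}) {0}ᶜ := by
  intro p hp q hq hpq
  rw [← hx.reduce_eq p hp, ← hx.reduce_eq q hq]
  exact reduce_eq_of_span_eq (by rwa [hx.reduce_eq p hp]) hpq

theorem cross_dot_ne_zero_of_ne (hx : IsArcSection x) {p q r : Fin 3 → ZMod 2} (hp : p ≠ 0)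
    (hq : q ≠ 0) (hr : r ≠ 0) (hpq : p ≠ q) (hpr : p ≠ r) (hqr : q ≠ r) :
    x p ⨯₃ x q ⬝ᵥ x r ≠ 0 := by
  intro h
  have hred : p ⨯₃ q ⬝ᵥ r = 0 := by
    have hmod : reduce (x p ⨯₃ x q) ⬝ᵥ reduce (x r) = 0 := by
      rw [reduce, reduce, ← red.map_dotProduct, h, map_zero]
    rwa [reduce_cross, hx.reduce_eq p hp, hx.reduce_eq q hq, hx.reduce_eq r hr] at hmod
  rcases eq_or_eq_add_of_cross_dot_eq_zero hp hq hpq hred with rfl | rfl | rfl | rfl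
  · exact hr rfl
  · exact hpr rfl
  · exact hqr rfl
  · exact hx.cross_dot_ne_zero p q hp hq hpq h

theorem isHyperoval (hx : IsArcSection x) : IsHyperoval (pointSet x) := by
  refine ⟨?_, ?_, fun L hL => ?_⟩
  · rintro _ ⟨p, hp, rfl⟩
    exact isPoint_iff.2 ⟨x p, by rwa [hx.reduce_eq p hp], rfl⟩
  · rw [pointSet, hx.injOn_span.ncard_image, ncard_compl_singleton_zero]
  · by_contra! hthree
    obtain ⟨_, ⟨⟨p, hp, rfl⟩, hpL⟩, _, ⟨⟨q, hq, rfl⟩, hqL⟩, _, ⟨⟨r, hr, rfl⟩, hrL⟩,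
        hpq, hpr, hqr⟩ :=
      (Set.two_lt_ncard ((Set.toFinite _).image _ |>.sep _)).1 hthree
    have hspan {r s} : span R4 {x r} ≠ span R4 {x s} → r ≠ s :=
      ne_of_apply_ne fun p => span R4 {x p}
    refine hx.cross_dot_ne_zero_of_ne hp hq hr (hspan hpq) (hspan hpr) (hspan hqr)
      (hL.cross_dot_eq_zero (hpL ?_) (hqL ?_) (hrL ?_)) <;>
      exact mem_span_singleton_self _

theorem mulVec (hx : IsArcSection x) {M : Matrix (Fin 3) (Fin 3) R4} (hM : M.map red = 1) :
    IsArcSection fun p => M *ᵥ x p where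
  reduce_eq p hp := by rw [reduce_mulVec hM, hx.reduce_eq p hp]
  cross_dot_ne_zero p q hp hq hpq := by
    have hdet : IsUnit M.det := isUnit_det_of_left_inverse (mul_self_eq_one_of_map_red_eq_one hM)
    rw [mulVec_cross_mulVec_dot, Ne, hdet.mul_right_eq_zero]
    exact hx.cross_dot_ne_zero p q hp hq hpq

end IsArcSection

/-- The arc section through the frame (1,0,0), (0,1,0), (0,0,1), (1,1,1); its other points are
(1,-1,2), (2,1,-1) and (-1,2,1). The second summand vanishes on the frame. -/
def baseSection (p : Fin 3 → ZMod 2) : Fin 3 → R4 :=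
  fun i => (p i).cast + 2 * (p (i - 1)).cast * ((p i).cast + (p (i + 1)).cast)

theorem isArcSection_baseSection : IsArcSection baseSection where
  reduce_eq := by decide
  cross_dot_ne_zero := by decide

theorem baseSection_single : ∀ i, baseSection (Pi.single i 1) = Pi.single i 1 := by
  decide

theorem baseSection_one : baseSection 1 = 1 := by
  decide

theorem eq_baseSection_of_cross_dot_ne_zero : ∀ (i : Fin 3) (v : Fin 3 → R4),
    reduce v = 1 + Pi.single i 1 →
    Pi.single (i + 1) 1 ⨯₃ Pi.single (i + 2) 1 ⬝ᵥ v ≠ 0 → Pi.single i 1 ⨯₃ 1 ⬝ᵥ v ≠ 0 →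
    v = baseSection (1 + Pi.single i 1) ∨ v = -baseSection (1 + Pi.single i 1) := by
  decide +kernel

theorem eq_frame_or_diagonal : ∀ {p : Fin 3 → ZMod 2}, p ≠ 0 →
    p = 1 ∨ ∃ i, p = Pi.single i 1 ∨ p = 1 + Pi.single i 1 := by
  decide

theorem IsArcSection.eq_baseSection_or_eq_neg {y : (Fin 3 → ZMod 2) → Fin 3 → R4}
    (hy : IsArcSection y) (hone : y 1 = 1)
    (hsingle : ∀ i, y (Pi.single i 1) = Pi.single i 1 ∨ y (Pi.single i 1) = -Pi.single i 1)
    {p : Fin 3 → ZMod 2} (hp : p ≠ 0) : y p = baseSection p ∨ y p = -baseSection p := by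
  rcases eq_frame_or_diagonal hp with rfl | ⟨i, rfl | rfl⟩
  · exact Or.inl (hone.trans baseSection_one.symm)
  · simpa only [baseSection_single] using hsingle i
  · have hdistinct : (Pi.single (i + 1) 1 : Fin 3 → ZMod 2) ≠ Pi.single (i + 2) 1 ∧
        (Pi.single i 1 : Fin 3 → ZMod 2) ≠ 1 := by revert i; decide
    have hsum : (Pi.single (i + 1) 1 : Fin 3 → ZMod 2) + Pi.single (i + 2) 1 =
        1 + Pi.single i 1 := by revert i; decide
    have hside := hy.cross_dot_ne_zero (Pi.single (i + 1) 1) (Pi.single (i + 2) 1)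
      (by simp) (by simp) hdistinct.1
    have hmedian := hy.cross_dot_ne_zero (Pi.single i 1) 1 (by simp) one_ne_zero hdistinct.2
    rw [hsum] at hside
    rw [add_comm] at hmedian
    exact eq_baseSection_of_cross_dot_ne_zero i _ (hy.reduce_eq _ hp)
      (cross_dot_ne_zero_of_eq_or_eq_neg (hsingle (i + 1)) (hsingle (i + 2)) hside)
      (cross_dot_ne_zero_of_eq_or_eq_neg (hsingle i) (Or.inl hone) hmedian)

theorem exists_mulVec_frame {x : (Fin 3 → ZMod 2) → Fin 3 → R4}
    (hx : ∀ p ≠ 0, reduce (x p) = p) :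
    ∃ M : Matrix (Fin 3) (Fin 3) R4, M.map red = 1 ∧ x 1 = M *ᵥ 1 ∧
      ∀ i, x (Pi.single i 1) = M *ᵥ Pi.single i 1 ∨ x (Pi.single i 1) = -(M *ᵥ Pi.single i 1) := by
  let A : Matrix (Fin 3) (Fin 3) R4 := (of fun j => x (Pi.single j 1))ᵀ
  have hA : A.map red = 1 := by
    ext i j
    simpa [A, reduce, one_apply, Pi.single_apply] using congrFun (hx (Pi.single j 1) (by simp)) i
  set c := A *ᵥ x 1 with hc
  have hcred : ∀ i, red (c i) = 1 := congrFun ((reduce_mulVec hA _).trans (hx 1 one_ne_zero))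
  refine ⟨A * diagonal c, ?_, ?_, fun i => ?_⟩
  · have hdiag : (diagonal c).map red = 1 := by
      rw [diagonal_map (map_zero red), ← diagonal_one]
      exact congrArg diagonal (funext hcred)
    rw [Matrix.map_mul, hA, hdiag, one_mul]
  · have hcone : diagonal c *ᵥ 1 = c := by ext; simp [mulVec_diagonal]
    rw [← mulVec_mulVec, hcone, hc, mulVec_mulVec, mul_self_eq_one_of_map_red_eq_one hA, one_mulVec]
  · have hcol : (A * diagonal c) *ᵥ Pi.single i 1 = c i • x (Pi.single i 1) := by
      ext j
      simp [A, mul_comm]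
    rw [hcol]
    rcases eq_one_or_eq_neg_one_of_red_eq_one (hcred i) with h | h <;> simp [h]

theorem IsArcSection.exists_pointSet_eq {x : (Fin 3 → ZMod 2) → Fin 3 → R4}
    (hx : IsArcSection x) :
    ∃ M : Matrix (Fin 3) (Fin 3) R4, M.map red = 1 ∧
      pointSet x = pointSet fun p => M *ᵥ baseSection p := by
  obtain ⟨M, hM, hone, hsingle⟩ := exists_mulVec_frame hx.reduce_eq
  have hMM : ∀ v, M *ᵥ (M *ᵥ v) = v := fun v => by
    rw [mulVec_mulVec, mul_self_eq_one_of_map_red_eq_one hM, one_mulVec]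
  refine ⟨M, hM, pointSet_congr fun p hp =>
    (span_singleton_eq_iff (by rwa [hx.reduce_eq p hp])).2 ?_⟩
  have hframe := (hx.mulVec hM).eq_baseSection_or_eq_neg (by rw [hone, hMM])
    (fun i => (hsingle i).imp (fun h => by rw [h, hMM]) (fun h => by rw [h, mulVec_neg, hMM])) hp
  rw [← hMM (x p), ← mulVec_neg]
  exact hframe.imp (congrArg (M *ᵥ ·)) (congrArg (M *ᵥ ·))

/-- Representatives, modulo ±1, of the matrices congruent to the identity modulo 2. -/
def normalizedMatrices : Set (Matrix (Fin 3) (Fin 3) R4) :=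
  {M | M.map red = 1 ∧ M 0 0 = 1}

theorem ncard_normalizedMatrices : normalizedMatrices.ncard = 256 := by
  let entries (i j : Fin 3) : Finset R4 :=
    {a | red a = (1 : Matrix (Fin 3) (Fin 3) (ZMod 2)) i j ∧ (i = 0 ∧ j = 0 → a = 1)}
  let matrices : Finset (Matrix (Fin 3) (Fin 3) R4) :=
    Fintype.piFinset fun i => Fintype.piFinset (entries i)
  have hmem : normalizedMatrices = matrices := by
    ext M
    have hM : M ∈ matrices ↔ ∀ i j, M i j ∈ entries i j :=
      Fintype.mem_piFinset.trans (forall_congr' fun _ => Fintype.mem_piFinset)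
    simp [hM, normalizedMatrices, entries, ← Matrix.ext_iff, forall_and]
  have hcard : #matrices = ∏ i, ∏ j, #(entries i j) :=
    (Fintype.card_piFinset _).trans (prod_congr rfl fun _ _ => Fintype.card_piFinset _)
  rw [hmem, Set.ncard_coe_finset, hcard]
  decide

theorem injOn_pointSet_mulVec_baseSection :
    Set.InjOn (fun M => pointSet fun p => M *ᵥ baseSection p) normalizedMatrices := by
  rintro M ⟨hM, hM₀⟩ N ⟨hN, hN₀⟩ hMN
  have hrel : ∀ p ≠ 0, (M * N) *ᵥ baseSection p = baseSection p ∨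
      (M * N) *ᵥ baseSection p = -baseSection p := by
    intro p hp
    have h := eq_or_eq_neg_of_pointSet_subset (isArcSection_baseSection.mulVec hN).reduce_eq
      (isArcSection_baseSection.mulVec hM).reduce_eq hMN.superset hp
    have hMM : M *ᵥ M *ᵥ baseSection p = baseSection p := by
      rw [mulVec_mulVec, mul_self_eq_one_of_map_red_eq_one hM, one_mulVec]
    rw [← mulVec_mulVec]
    exact h.imp (fun h => by rw [h, hMM]) (fun h => by rw [h, mulVec_neg, hMM])
  have hsingle i := hrel (Pi.single i 1) (by simp)
  have hone := hrel 1 one_ne_zero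
  simp only [baseSection_single, baseSection_one] at hsingle hone
  have hN_eq : N = M * (M * N) := by
    rw [← mul_assoc, mul_self_eq_one_of_map_red_eq_one hM, one_mul]
  rcases eq_one_or_eq_neg_one_of_mulVec_frame hsingle hone with h | h
  · rw [hN_eq, h, mul_one]
  · rw [h, mul_neg_one] at hN_eq
    rw [hN_eq, neg_apply, hM₀] at hN₀
    exact absurd hN₀ (by decide)

theorem setOf_isHyperoval_eq_image :
    {H : Set (Submodule R4 (Fin 3 → R4)) | IsHyperoval H} =
      (fun M => pointSet fun p => M *ᵥ baseSection p) '' normalizedMatrices := by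
  ext H
  constructor
  · intro hH
    obtain ⟨x, hx, rfl⟩ := IsHyperoval.exists_isArcSection hH
    obtain ⟨M, hM, hxM⟩ := hx.exists_pointSet_eq
    have hM₀ : red (M 0 0) = 1 := congrFun₂ hM 0 0
    rcases eq_one_or_eq_neg_one_of_red_eq_one hM₀ with h | h
    · exact ⟨M, ⟨hM, h⟩, hxM.symm⟩
    · refine ⟨-M, ⟨?_, by simp [h]⟩, hxM.symm ▸ pointSet_congr fun p _ => ?_⟩
      · ext i j
        simpa [ZMod.neg_eq_self_mod_two] using congrFun₂ hM i j
      · simp [neg_mulVec, ← Set.neg_singleton]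
  · rintro ⟨M, ⟨hM, -⟩, rfl⟩
    exact (isArcSection_baseSection.mulVec hM).isHyperoval

/-- PHG(2, ℤ/4ℤ) contains exactly 256 hyperovals. -/
theorem hyperoval_count :
    {H : Set (Submodule R4 (Fin 3 → R4)) | IsHyperoval H}.ncard = 256 := by
  rw [setOf_isHyperoval_eq_image, injOn_pointSet_mulVec_baseSection.ncard_image,
    ncard_normalizedMatrices]
end

section
/- For every hyperoval H of PHG(2, ℤ/4ℤ), the setwise stabilizer of H in PGL(3, ℤ/4ℤ) has order 168. -/
abbrev GL3 := GL (Fin 3) R4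

/-- The subgroup {I, -I} of scalar matrices of GL(3, ℤ/4ℤ)
(the units of ℤ/4ℤ are ±1). -/
def pmOne : Subgroup GL3 where
  carrier := {1, -1}
  one_mem' := Or.inl rfl
  mul_mem' := by rintro a b (rfl | rfl) (rfl | rfl) <;> simp
  inv_mem' := by rintro a (rfl | rfl) <;> simp

instance : pmOne.Normal := by
  constructor
  rintro n (rfl | rfl) g
  · simpa using pmOne.one_mem
  · right
    simp [mul_neg, neg_mul, Set.mem_singleton_iff]

/-- PGL(3, ℤ/4ℤ): GL(3, ℤ/4ℤ) modulo its subgroup of scalar matrices {I, -I}. -/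
abbrev PGL3 := GL3 ⧸ pmOne

/-- A matrix maps a point (the span of a vector) to the span of the image vector;
equivalently, it maps a submodule to its image. -/
def mapPt (g : GL3) (P : Submodule R4 (Fin 3 → R4)) : Submodule R4 (Fin 3 → R4) :=
  P.map (Matrix.mulVecLin (g : Matrix (Fin 3) (Fin 3) R4))

lemma mapPt_neg (h : GL3) (P : Submodule R4 (Fin 3 → R4)) : mapPt (-h) P = mapPt h P := by
  unfold mapPt
  have : Matrix.mulVecLin ((-h : GL3) : Matrix (Fin 3) (Fin 3) R4)
      = -Matrix.mulVecLin ((h : GL3) : Matrix (Fin 3) (Fin 3) R4) := by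
    ext v i
    simp [Matrix.neg_mulVec]
  rw [this, Submodule.map_neg]

/-- The induced action of PGL(3, ℤ/4ℤ) on points of PHG(2, ℤ/4ℤ). -/
def pglMapPt (g : PGL3) (P : Submodule R4 (Fin 3 → R4)) : Submodule R4 (Fin 3 → R4) :=
  Quotient.liftOn' g (fun h => mapPt h P) (by
    intro a b hab
    rw [QuotientGroup.leftRel_apply] at hab
    rcases hab with h1 | h1
    · have hb : b = a := by
        have h2 := mul_inv_cancel_left a b
        rw [h1, mul_one] at h2
        exact h2.symm
      rw [hb]
    · rw [Set.mem_singleton_iff] at h1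
      have hb : b = -a := by
        have h2 := mul_inv_cancel_left a b
        rw [h1, mul_neg, mul_one] at h2
        exact h2.symm
      rw [hb]
      exact (mapPt_neg a P).symm)

/-- The induced action of PGL(3, ℤ/4ℤ) on sets of points. -/
def pglMapSet (g : PGL3) (H : Set (Submodule R4 (Fin 3 → R4))) : Set (Submodule R4 (Fin 3 → R4)) :=
  pglMapPt g '' H

/-!
Reduction modulo 2 maps `PGL(3, ℤ/4ℤ)` onto `GL(3, 𝔽₂)`, a group of order `7 * 6 * 4 = 168`, and
the stabilizer of a hyperoval `H` is a complement of the kernel of this map.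

Two points of `H` cannot have the same reduction: if `P` and `Q` did, each of the other five points
of `H` would lie on a line through `P` missing `Q`, no two of them on the same one, but only four
lines through `P` miss `Q`. So `H` has exactly one point above each of the seven points of the Fano
plane, and every `A ∈ GL(3, 𝔽₂)` lifts to some `g` over `ℤ/4ℤ` mapping the standard frame into `H`.
A hyperoval containing the standard frame is unique, so `g` maps it onto `H`. Comparing the lifts
of `A` and of `1` gives an element of the stabilizer above `A`. Conversely, an element of the
stabilizer that reduces to `1` fixes every point of `H`, in particular a frame, and is scalar.
-/

open Matrix

theorem exists_isUnit_apply_iff_comp_ne_zero {R K ι : Type*} [CommRing R] [Field K]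
    (φ : R →+* K) [IsLocalHom φ] {v : ι → R} : (∃ i, IsUnit (v i)) ↔ φ ∘ v ≠ 0 := by
  simp [funext_iff, ← isUnit_map_iff φ]

theorem span_singleton_le_ker_dotProductBilin {R n : Type*} [CommRing R] [Fintype n]
    {u v : n → R} : R ∙ v ≤ LinearMap.ker (dotProductBilin R R u) ↔ u ⬝ᵥ v = 0 :=
  Submodule.span_singleton_le_iff_mem _ _

theorem span_neg_singleton {R M : Type*} [Ring R] [AddCommGroup M] [Module R M] (x : M) :
    R ∙ (-x) = R ∙ x := by
  rw [← Set.neg_singleton, Submodule.span_neg]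

theorem span_single_one_injective {R n : Type*} [CommRing R] [Nontrivial R] [DecidableEq n] :
    Function.Injective fun j : n => R ∙ (Pi.single j 1 : n → R) := by
  intro i j hij
  have hi : Pi.single i 1 ∈ R ∙ (Pi.single j 1 : n → R) :=
    hij.le (Submodule.mem_span_singleton_self _)
  obtain ⟨c, hc⟩ := Submodule.mem_span_singleton.1 hi
  by_contra hne
  simpa [hne] using congrFun hc i

theorem span_one_ne_span_single {R n : Type*} [CommRing R] [Nontrivial R] [DecidableEq n]
    [Nontrivial n] (j : n) : R ∙ (1 : n → R) ≠ R ∙ (Pi.single j 1 : n → R) := by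
  intro h
  have one_mem : 1 ∈ R ∙ (Pi.single j 1 : n → R) := h.le (Submodule.mem_span_singleton_self _)
  obtain ⟨c, hc⟩ := Submodule.mem_span_singleton.1 one_mem
  obtain ⟨i, hi⟩ := exists_ne j
  simpa [hi] using congrFun hc i

theorem mulVecLin_bijective {R n : Type*} [CommRing R] [Fintype n] [DecidableEq n] (g : GL n R) :
    Function.Bijective (mulVecLin g.1) := by
  refine ⟨mulVec_injective_of_isUnit g.isUnit, fun v => ⟨g⁻¹.1 *ᵥ v, ?_⟩⟩
  simp

theorem map_mulVecLin_span_singleton {R n : Type*} [CommRing R] [Fintype n] (M : Matrix n n R)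
    (v : n → R) : (R ∙ v).map M.mulVecLin = R ∙ (M *ᵥ v) := by
  rw [Submodule.map_span, Set.image_singleton, mulVecLin_apply]

theorem ringHom_comp_mulVec {R S n : Type*} [CommRing R] [CommRing S] [Fintype n] [DecidableEq n]
    (φ : R →+* S) (g : GL n R) (v : n → R) :
    φ ∘ (g.1 *ᵥ v) = (GeneralLinearGroup.map φ g).1 *ᵥ (φ ∘ v) :=
  funext (φ.map_mulVec g.1 v)

theorem mulVec_ne_zero {R n : Type*} [CommRing R] [Fintype n] [DecidableEq n] (g : GL n R)
    {v : n → R} (hv : v ≠ 0) : g.1 *ᵥ v ≠ 0 := fun h =>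
  hv (mulVec_injective_of_isUnit g.isUnit (h.trans (mulVec_zero _).symm))

theorem exists_eq_scalar_of_mulVec_mem_span {R n : Type*} [CommRing R] [Fintype n] [DecidableEq n]
    {M : Matrix n n R} (hM : ∀ j, M *ᵥ Pi.single j 1 ∈ R ∙ (Pi.single j 1 : n → R))
    (hM1 : M *ᵥ 1 ∈ R ∙ (1 : n → R)) : ∃ c, M = scalar n c := by
  simp only [Submodule.mem_span_singleton] at hM hM1
  choose d hd using hM
  obtain ⟨c, hc⟩ := hM1
  have M_eq_diagonal : M = diagonal d := by
    refine ext_col fun j => ?_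
    rw [← mulVec_single_one, ← mulVec_single_one, ← hd, diagonal_mulVec_single, mul_one,
      ← Pi.single_smul, smul_eq_mul, mul_one]
  have d_eq_const : d = fun _ => c := by
    ext i
    simpa [M_eq_diagonal, mulVec_diagonal] using (congrFun hc i).symm
  exact ⟨c, by rw [M_eq_diagonal, d_eq_const, scalar_apply]⟩

theorem exists_generalLinearGroup_map_eq_of_frame {R S n : Type*} [CommRing R] [CommRing S]
    [Fintype n] [DecidableEq n] (φ : R →+* S) [IsLocalHom φ] (A : GL n S) {q : n → n → R}
    {p : n → R} (hq : ∀ j, φ ∘ q j = A.1.col j) (hp : φ ∘ p = A.1 *ᵥ 1) :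
    ∃ g : GL n R, GeneralLinearGroup.map φ g = A ∧
      (∀ j, ∃ c : R, IsUnit c ∧ g.1 *ᵥ Pi.single j 1 = c • q j) ∧ g.1 *ᵥ 1 = p := by
  let Q : Matrix n n R := (Matrix.of q)ᵀ
  have Q_map : Q.map φ = A := by
    ext i j
    exact congrFun (hq j) i
  have isUnit_Q : IsUnit Q := by
    rw [isUnit_iff_isUnit_det, ← isUnit_map_iff φ, φ.map_det, RingHom.mapMatrix_apply,
      Q_map, ← isUnit_iff_isUnit_det]
    exact A.isUnit
  -- Rescaling the columns of `Q` by the coordinates of `p` makes `p` the image of the vector `1`.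
  let c : n → R := Q⁻¹ *ᵥ p
  have Q_mulVec_c : Q *ᵥ c = p := by
    simp [c, mul_nonsing_inv, (isUnit_iff_isUnit_det Q).1 isUnit_Q]
  have c_map : φ ∘ c = 1 := by
    apply mulVec_injective_of_isUnit A.isUnit
    rw [← hp, ← Q_mulVec_c, ← Q_map]
    exact (funext (φ.map_mulVec Q c)).symm
  have isUnit_c (j : n) : IsUnit (c j) := by
    rw [← isUnit_map_iff φ, ← Function.comp_apply (f := φ), c_map]
    exact isUnit_one
  have isUnit_diagonal : IsUnit (diagonal c) :=
    isUnit_diagonal.2 (Pi.isUnit_iff.2 isUnit_c)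
  refine ⟨(isUnit_Q.mul isUnit_diagonal).unit, Units.ext ?_, fun j => ⟨c j, isUnit_c j, ?_⟩, ?_⟩
  · ext i j
    have φ_c : φ (c j) = 1 := congrFun c_map j
    simp [← Q_map, φ_c]
  · ext i
    simp [Q, mul_comm]
  · rw [IsUnit.unit_spec, ← mulVec_mulVec, ← Q_mulVec_c]
    congr 1
    ext i
    simp [mulVec_diagonal]

/-- The standard frame of the projective geometry of `Rⁿ`: the coordinate points together with the
span of the all-ones vector. A hyperoval is brought into standard position by moving the standard
frame into it. -/
def standardFrame (R n : Type) [CommRing R] [DecidableEq n] : Set (Submodule R (n → R)) :=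
  insert (R ∙ 1) (Set.range fun j => R ∙ Pi.single j 1)

theorem ncard_standardFrame_le (R n : Type) [CommRing R] [Fintype n] [DecidableEq n] :
    (standardFrame R n).ncard ≤ Fintype.card n + 1 := by
  grw [standardFrame, Set.ncard_insert_le, ← Set.image_univ, Set.ncard_image_le, Set.ncard_univ,
    Nat.card_eq_fintype_card]

theorem IsPoint.map_mulVecLin {R : Type} [CommRing R] [IsLocalRing R] {n : ℕ}
    {P : Submodule R (Fin n → R)} (hP : IsPoint P) (g : GL (Fin n) R) :
    IsPoint (P.map (mulVecLin g.1)) := by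
  obtain ⟨v, hv, rfl⟩ := hP
  refine ⟨g.1 *ᵥ v, ?_, map_mulVecLin_span_singleton g.1 v⟩
  rw [exists_isUnit_apply_iff_comp_ne_zero (IsLocalRing.residue R)] at hv ⊢
  rw [ringHom_comp_mulVec]
  exact mulVec_ne_zero _ hv

theorem isFreeRank_ker_dotProductBilin {R : Type} [CommRing R] {n : ℕ}
    {u : Fin (n + 1) → R} (hu : ∃ i, IsUnit (u i)) :
    IsFreeRank n (LinearMap.ker (dotProductBilin R R u)) := by
  obtain ⟨i, c, hc⟩ := hu
  have mem_ker (v : Fin (n + 1) → R) : v ∈ LinearMap.ker (dotProductBilin R R u) ↔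
      c * v i + ∑ j, u (i.succAbove j) * v (i.succAbove j) = 0 := by
    rw [hc, ← Fin.sum_univ_succAbove (fun j => u j * v j) i]
    rfl
  let f : LinearMap.ker (dotProductBilin R R u) →ₗ[R] (Fin n → R) :=
    LinearMap.funLeft R R i.succAbove ∘ₗ Submodule.subtype _
  refine ⟨(LinearEquiv.ofBijective f ⟨?_, fun w => ?_⟩).symm⟩
  · rw [injective_iff_map_eq_zero]
    rintro ⟨v, hv⟩ hfv
    have hv' (j : Fin n) : v (i.succAbove j) = 0 := congrFun hfv j
    have hvi : v i = 0 := by simpa [hv'] using (mem_ker v).1 hv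
    exact Subtype.ext (funext ((Fin.forall_iff_succAbove i).2 ⟨hvi, hv'⟩))
  · refine ⟨⟨i.insertNth (-(↑c⁻¹ * ∑ j, u (i.succAbove j) * w j)) w, ?_⟩, ?_⟩
    · simp [mem_ker]
    · ext j
      simp [f]

theorem IsFreeRank.comap {R : Type} [CommRing R] {n k : ℕ} {L : Submodule R (Fin n → R)}
    (hL : IsFreeRank k L) {f : (Fin n → R) →ₗ[R] (Fin n → R)} (hf : Function.Bijective f) :
    IsFreeRank k (L.comap f) :=
  hL.map fun e => e ≪≫ₗ ((L.comap f).equivMapOfInjective f hf.1 ≪≫ₗ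
    LinearEquiv.ofEq _ _ (Submodule.map_comap_eq_of_surjective hf.2 L)).symm

namespace IsHyperoval

section CommRing

variable {R : Type} [CommRing R] {H : Set (Submodule R (Fin 3 → R))}

theorem image_map_mulVecLin [IsLocalRing R] (hH : IsHyperoval H) (g : GL (Fin 3) R) :
    IsHyperoval (Submodule.map (mulVecLin g.1) '' H) := by
  have map_injective := Submodule.map_injective_of_injective (mulVecLin_bijective g).1
  refine ⟨?_, ?_, fun L hL => ?_⟩
  · rintro _ ⟨P, hP, rfl⟩
    exact (hH.1 P hP).map_mulVecLin g
  · rw [Set.ncard_image_of_injective _ map_injective, hH.2.1]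
  · have points_on_line : {P ∈ Submodule.map (mulVecLin g.1) '' H | P ≤ L} =
        Submodule.map (mulVecLin g.1) '' {P ∈ H | P ≤ L.comap (mulVecLin g.1)} := by
      ext P
      simp only [Set.mem_ofPred_eq, Set.mem_image, ← Submodule.map_le_iff_le_comap]
      grind
    rw [points_on_line, Set.ncard_image_of_injective _ map_injective]
    exact hH.2.2 _ (hL.comap (mulVecLin_bijective g))

theorem finite (hH : IsHyperoval H) : H.Finite :=
  Set.finite_of_ncard_ne_zero (by simp [hH.2.1])

theorem eq_or_eq_of_le_line (hH : IsHyperoval H) {L P Q S : Submodule R (Fin 3 → R)}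
    (hL : IsLine L) (hP : P ∈ H) (hQ : Q ∈ H) (hS : S ∈ H) (hPQ : P ≠ Q)
    (hPL : P ≤ L) (hQL : Q ≤ L) (hSL : S ≤ L) : S = P ∨ S = Q := by
  by_contra! hne
  refine (hH.2.2 L hL).not_gt ((Set.two_lt_ncard (hH.finite.subset (Set.sep_subset _ _))).2 ?_)
  exact ⟨P, ⟨hP, hPL⟩, Q, ⟨hQ, hQL⟩, S, ⟨hS, hSL⟩, hPQ, hne.1.symm, hne.2.symm⟩

theorem eq_or_eq_of_dotProduct_eq_zero (hH : IsHyperoval H) {u v w x : Fin 3 → R}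
    (hu : ∃ i, IsUnit (u i)) (hv : R ∙ v ∈ H) (hw : R ∙ w ∈ H) (hx : R ∙ x ∈ H)
    (hvw : R ∙ v ≠ R ∙ w) (huv : u ⬝ᵥ v = 0) (huw : u ⬝ᵥ w = 0) (hux : u ⬝ᵥ x = 0) :
    R ∙ x = R ∙ v ∨ R ∙ x = R ∙ w := by
  simp only [← span_singleton_le_ker_dotProductBilin] at huv huw hux
  exact hH.eq_or_eq_of_le_line (isFreeRank_ker_dotProductBilin hu) hv hw hx hvw huv huw hux

theorem ne_zero_and_injective_of_notMem_standardFrame [Nontrivial R] (hH : IsHyperoval H)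
    (hF : standardFrame R (Fin 3) ⊆ H) {v : Fin 3 → R} (hv : R ∙ v ∈ H)
    (hvF : R ∙ v ∉ standardFrame R (Fin 3)) : (∀ k, v k ≠ 0) ∧ Function.Injective v := by
  have one_mem : R ∙ 1 ∈ H := hF (Set.mem_insert _ _)
  have single_mem (j) : R ∙ Pi.single j 1 ∈ H := hF (Set.mem_insert_of_mem _ ⟨j, rfl⟩)
  simp only [standardFrame, Set.mem_insert_iff, Set.mem_range, not_or, not_exists] at hvF
  have others : ∀ k : Fin 3, ∃ i j, k ≠ i ∧ k ≠ j ∧ i ≠ j := by decide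
  have third : ∀ i j : Fin 3, ∃ k, k ≠ i ∧ k ≠ j := by decide
  -- `v k = 0` would put `R ∙ v` on the line `x k = 0` through two of the coordinate points.
  have ne_zero (k) : v k ≠ 0 := by
    intro hk
    obtain ⟨i, j, hki, hkj, hij⟩ := others k
    rcases hH.eq_or_eq_of_dotProduct_eq_zero (u := Pi.single k 1) ⟨k, by simp⟩
      (single_mem i) (single_mem j) hv (span_single_one_injective.ne hij)
      (by simp [hki]) (by simp [hkj]) (by simp [hk]) with h | h
    exacts [hvF.2 i h.symm, hvF.2 j h.symm]
  -- `v i = v j` would put `R ∙ v` on the line `x i = x j` through `R ∙ 1` and a coordinate point.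
  refine ⟨ne_zero, fun i j hv_eq => ?_⟩
  by_contra hij
  obtain ⟨k, hki, hkj⟩ := third i j
  rcases hH.eq_or_eq_of_dotProduct_eq_zero (u := Pi.single i 1 - Pi.single j 1)
    ⟨i, by simp [hij]⟩ one_mem (single_mem k) hv (span_one_ne_span_single k)
    (by simp [sub_dotProduct]) (by simp [hki.symm, hkj.symm])
    (by simp [sub_dotProduct, hv_eq]) with h | h
  exacts [hvF.1 h, hvF.2 k h.symm]

end CommRing

end IsHyperoval

/-- Reduction modulo 2. A vector spans a point iff its reduction is nonzero, and two points are
neighbours in the Hjelmslev plane iff their generators have the same reduction. -/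
abbrev reduceTwo : R4 →+* ZMod 2 := ZMod.castHom (by norm_num) (ZMod 2)

instance : IsLocalHom reduceTwo := ⟨by decide⟩

instance : IsLocalRing R4 := reduceTwo.domain_isLocalRing

theorem IsPoint.exists_reduceTwo_ne_zero {n : ℕ} {P : Submodule R4 (Fin n → R4)} (hP : IsPoint P) :
    ∃ v, reduceTwo ∘ v ≠ 0 ∧ P = R4 ∙ v := by
  simpa only [IsPoint, exists_isUnit_apply_iff_comp_ne_zero reduceTwo] using hP

theorem exists_line_through_of_reduceTwo_eq : ∀ v w : Fin 3 → R4,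
    reduceTwo ∘ v = reduceTwo ∘ w → ∃ u, reduceTwo ∘ u ≠ 0 ∧ u ⬝ᵥ v = 0 ∧ u ⬝ᵥ w = 0 := by
  decide +kernel

theorem comp_crossProduct {R S : Type*} [CommRing R] [CommRing S] (φ : R →+* S)
    (v w : Fin 3 → R) : φ ∘ (v ⨯₃ w) = (φ ∘ v) ⨯₃ (φ ∘ w) := by
  ext i
  fin_cases i <;> simp [cross_apply]

theorem exists_line_through (v w : Fin 3 → R4) (hv : reduceTwo ∘ v ≠ 0) (hw : reduceTwo ∘ w ≠ 0) :
    ∃ u, reduceTwo ∘ u ≠ 0 ∧ u ⬝ᵥ v = 0 ∧ u ⬝ᵥ w = 0 := by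
  by_cases h : reduceTwo ∘ v = reduceTwo ∘ w
  · exact exists_line_through_of_reduceTwo_eq v w h
  have cross_ne_zero : ∀ x y : Fin 3 → ZMod 2, x ≠ 0 → y ≠ 0 → x ≠ y → x ⨯₃ y ≠ 0 := by
    decide +kernel
  refine ⟨v ⨯₃ w, ?_, by simp [dotProduct_comm], by simp [dotProduct_comm]⟩
  rw [comp_crossProduct]
  exact cross_ne_zero _ _ hv hw h

/-- The lines through the point spanned by `v` that miss the point spanned by `w`, encoded by their
covectors, so that each line is counted twice, by `u` and by `-u`. -/
def linesThroughAvoiding (v w : Fin 3 → R4) : Finset (Fin 3 → R4) :=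
  {u | reduceTwo ∘ u ≠ 0 ∧ u ⬝ᵥ v = 0 ∧ u ⬝ᵥ w ≠ 0}

theorem mem_linesThroughAvoiding {u v w : Fin 3 → R4} :
    u ∈ linesThroughAvoiding v w ↔ reduceTwo ∘ u ≠ 0 ∧ u ⬝ᵥ v = 0 ∧ u ⬝ᵥ w ≠ 0 := by
  simp [linesThroughAvoiding]

theorem neg_mem_linesThroughAvoiding {u v w : Fin 3 → R4} (hu : u ∈ linesThroughAvoiding v w) :
    -u ∈ linesThroughAvoiding v w := by
  simpa [mem_linesThroughAvoiding, funext_iff] using hu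

-- Of the six lines through a point, two pass through a given neighbour, which leaves four lines.
theorem card_linesThroughAvoiding_le : ∀ v w : Fin 3 → R4, reduceTwo ∘ v ≠ 0 →
    reduceTwo ∘ v = reduceTwo ∘ w → (linesThroughAvoiding v w).card ≤ 8 := by
  decide +kernel

theorem ne_neg_of_reduceTwo_ne_zero : ∀ u : Fin 3 → R4, reduceTwo ∘ u ≠ 0 → u ≠ -u := by
  decide +kernel

/-- The only possible hyperoval containing the standard frame, which serves as the standard position
of a hyperoval. Its points outside the frame are given by the vectors with pairwise distinct nonzero
coordinates, that is, the permutations of `(1, 2, 3)`, which are three points up to sign. -/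
def standardHyperoval : Set (Submodule R4 (Fin 3 → R4)) :=
  standardFrame R4 (Fin 3) ∪ (R4 ∙ ·) '' {v | (∀ k, v k ≠ 0) ∧ Function.Injective v}

theorem ncard_standardHyperoval_le : standardHyperoval.ncard ≤ 7 := by
  let reps : Finset (Fin 3 → R4) := {![1, 2, 3], ![2, 3, 1], ![3, 1, 2]}
  have reps_spec : ∀ v : Fin 3 → R4, (∀ k, v k ≠ 0) ∧ Function.Injective v →
      v ∈ reps ∨ -v ∈ reps := by
    decide +kernel
  have span_subset : (R4 ∙ ·) '' {v : Fin 3 → R4 | (∀ k, v k ≠ 0) ∧ Function.Injective v} ⊆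
      reps.image (R4 ∙ ·) := by
    rintro _ ⟨v, hv, rfl⟩
    rcases reps_spec v hv with h | h
    · simpa using ⟨v, h, rfl⟩
    · simpa using ⟨-v, h, span_neg_singleton v⟩
  calc standardHyperoval.ncard
      ≤ (standardFrame R4 (Fin 3)).ncard + _ := Set.ncard_union_le _ _
    _ ≤ (3 + 1) + 3 := by
      gcongr
      · exact ncard_standardFrame_le R4 (Fin 3)
      · grw [Set.ncard_le_ncard span_subset (Finset.finite_toSet _), Set.ncard_coe_finset,
          Finset.card_image_le]
        rfl

theorem image_mapPt_mul (g h : GL3) (H : Set (Submodule R4 (Fin 3 → R4))) :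
    mapPt (g * h) '' H = mapPt g '' (mapPt h '' H) := by
  rw [Set.image_image]
  exact Set.image_congr' fun P => by
    rw [mapPt, Units.val_mul, mulVecLin_mul, Submodule.map_comp, mapPt, mapPt]

theorem image_mapPt_one (H : Set (Submodule R4 (Fin 3 → R4))) : mapPt 1 '' H = H := by
  have mapPt_one : mapPt 1 = id := funext fun P => by
    rw [mapPt, Units.val_one, mulVecLin_one, Submodule.map_id, id]
  rw [mapPt_one, Set.image_id]

theorem image_mapPt_inv_eq_iff {g : GL3} {H H' : Set (Submodule R4 (Fin 3 → R4))} :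
    mapPt g⁻¹ '' H = H' ↔ mapPt g '' H' = H := by
  constructor <;> rintro rfl <;> simp [← image_mapPt_mul, image_mapPt_one]

theorem mem_pmOne_of_eq_scalar {g : GL3} {c : R4} (hg : g.1 = scalar (Fin 3) c) : g ∈ pmOne := by
  have isUnit_c : IsUnit c := by
    have isUnit_det := (isUnit_iff_isUnit_det g.1).1 g.isUnit
    simpa [hg, isUnit_pow_iff] using isUnit_det
  have units_eq : ∀ c : R4, IsUnit c → c = 1 ∨ c = -1 := by decide
  rcases units_eq c isUnit_c with rfl | rfl
  · exact Or.inl (Units.ext (hg.trans (map_one _)))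
  · exact Or.inr (Units.ext (hg.trans (by rw [map_neg, map_one, Units.val_neg, Units.val_one])))

/-- Reduction modulo 2 on `PGL(3, ℤ/4ℤ)`. It takes values in `GL(3, 𝔽₂)`, which is `PGL(3, 𝔽₂)`
since `1` is the only unit of `𝔽₂`. -/
noncomputable def reducePGL : PGL3 →* GL (Fin 3) (ZMod 2) :=
  QuotientGroup.lift pmOne (GeneralLinearGroup.map reduceTwo) <| by
    rintro g (rfl | rfl)
    · exact map_one _
    · refine Units.ext ((map_neg reduceTwo.mapMatrix 1).trans ?_)
      rw [map_one, CharTwo.neg_eq, Units.val_one]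

namespace IsHyperoval

section ZModFour

variable {H : Set (Submodule R4 (Fin 3 → R4))}

open Classical in
theorem two_le_card_linesThroughAvoiding_filter (hH : IsHyperoval H) {v w : Fin 3 → R4}
    (hv : R4 ∙ v ∈ H) (hw : R4 ∙ w ∈ H) (hv0 : reduceTwo ∘ v ≠ 0) (hvw : R4 ∙ v ≠ R4 ∙ w)
    {Q : Submodule R4 (Fin 3 → R4)} (hQ : Q ∈ H) (hQv : Q ≠ R4 ∙ v) (hQw : Q ≠ R4 ∙ w) :
    2 ≤ {u ∈ linesThroughAvoiding v w | Q ≤ LinearMap.ker (dotProductBilin R4 R4 u)}.card := by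
  obtain ⟨q, hq, rfl⟩ := (hH.1 Q hQ).exists_reduceTwo_ne_zero
  obtain ⟨u, hu, huv, huq⟩ := exists_line_through v q hv0 hq
  have huw : u ⬝ᵥ w ≠ 0 := fun huw =>
    (hH.eq_or_eq_of_dotProduct_eq_zero ((exists_isUnit_apply_iff_comp_ne_zero reduceTwo).2 hu)
      hv hw hQ hvw huv huw huq).elim hQv hQw
  have u_mem : u ∈ linesThroughAvoiding v w := mem_linesThroughAvoiding.2 ⟨hu, huv, huw⟩
  simp only [span_singleton_le_ker_dotProductBilin]
  exact Finset.one_lt_card.2 ⟨u, by simp [u_mem, huq],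
    -u, by simp [neg_mem_linesThroughAvoiding u_mem, huq], ne_neg_of_reduceTwo_ne_zero u hu⟩

theorem span_eq_span_of_reduceTwo_eq (hH : IsHyperoval H) {v w : Fin 3 → R4} (hv : R4 ∙ v ∈ H)
    (hw : R4 ∙ w ∈ H) (hv0 : reduceTwo ∘ v ≠ 0) (hvw : reduceTwo ∘ v = reduceTwo ∘ w) :
    R4 ∙ v = R4 ∙ w := by
  classical
  by_contra hne
  let others := (H \ {R4 ∙ v, R4 ∙ w}).toFinite.toFinset
  have mem_others {Q} : Q ∈ others ↔ Q ∈ H ∧ Q ≠ R4 ∙ v ∧ Q ≠ R4 ∙ w := by simp [others]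
  have card_others : others.card = 5 := by
    rw [← Set.ncard_eq_toFinset_card, Set.ncard_sdiff (Set.insert_subset hv (by simpa using hw)),
      hH.2.1, Set.ncard_pair hne]
  let incident : Submodule R4 (Fin 3 → R4) → (Fin 3 → R4) → Prop :=
    fun Q u => Q ≤ LinearMap.ker (dotProductBilin R4 R4 u)
  have two_le_card_lines (Q) (hQ : Q ∈ others) :
      2 ≤ ((linesThroughAvoiding v w).bipartiteAbove incident Q).card := by
    obtain ⟨hQH, hQv, hQw⟩ := mem_others.1 hQ
    exact hH.two_le_card_linesThroughAvoiding_filter hv hw hv0 hne hQH hQv hQw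
  have card_points_le_one (u) (hu : u ∈ linesThroughAvoiding v w) :
      (others.bipartiteBelow incident u).card ≤ 1 := by
    obtain ⟨hu0, huv, -⟩ := mem_linesThroughAvoiding.1 hu
    refine Finset.card_le_one.2 fun Q hQ S hS => ?_
    simp only [Finset.mem_bipartiteBelow, mem_others] at hQ hS
    have line_u := isFreeRank_ker_dotProductBilin
      ((exists_isUnit_apply_iff_comp_ne_zero reduceTwo).2 hu0)
    exact ((hH.eq_or_eq_of_le_line line_u hv hQ.1.1 hS.1.1 hQ.1.2.1.symm
      (span_singleton_le_ker_dotProductBilin.2 huv) hQ.2 hS.2).resolve_left hS.1.2.1).symm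
  have double_count := Finset.card_mul_le_card_mul incident two_le_card_lines card_points_le_one
  have card_le := card_linesThroughAvoiding_le v w hv0 hvw
  omega

theorem exists_span_mem_reduceTwo_eq (hH : IsHyperoval H) {x : Fin 3 → ZMod 2} (hx : x ≠ 0) :
    ∃ v, R4 ∙ v ∈ H ∧ reduceTwo ∘ v = x := by
  choose! rep rep_ne_zero eq_span_rep using fun P hP => (hH.1 P hP).exists_reduceTwo_ne_zero
  let neighborClass (P : H) : {x : Fin 3 → ZMod 2 // x ≠ 0} :=
    ⟨reduceTwo ∘ rep P, rep_ne_zero P P.2⟩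
  have injective : Function.Injective neighborClass := by
    rintro ⟨P, hP⟩ ⟨Q, hQ⟩ hPQ
    have span_eq := hH.span_eq_span_of_reduceTwo_eq (eq_span_rep P hP ▸ hP) (eq_span_rep Q hQ ▸ hQ)
      (rep_ne_zero P hP) (congrArg Subtype.val hPQ)
    rwa [← eq_span_rep P hP, ← eq_span_rep Q hQ, ← Subtype.mk.injEq P hP Q hQ] at span_eq
  have card_le : Nat.card {x : Fin 3 → ZMod 2 // x ≠ 0} ≤ Nat.card H := by
    rw [Nat.card_coe_set_eq, hH.2.1, Nat.card_eq_fintype_card]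
    decide
  obtain ⟨⟨P, hP⟩, hPx⟩ := (injective.bijective_of_nat_card_le card_le).2 ⟨x, hx⟩
  exact ⟨rep P, eq_span_rep P hP ▸ hP, congrArg Subtype.val hPx⟩

theorem eq_standardHyperoval (hH : IsHyperoval H) (hF : standardFrame R4 (Fin 3) ⊆ H) :
    H = standardHyperoval := by
  have subset : H ⊆ standardHyperoval := by
    intro P hP
    obtain ⟨v, -, rfl⟩ := hH.1 P hP
    by_cases hvF : R4 ∙ v ∈ standardFrame R4 (Fin 3)
    · exact Or.inl hvF
    · exact Or.inr ⟨v, hH.ne_zero_and_injective_of_notMem_standardFrame hF hP hvF, rfl⟩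
  exact Set.eq_of_subset_of_ncard_le subset (by rw [hH.2.1]; exact ncard_standardHyperoval_le)
    (Set.toFinite _)

theorem exists_image_mapPt_standardHyperoval_eq (hH : IsHyperoval H) (A : GL (Fin 3) (ZMod 2)) :
    ∃ g : GL3, GeneralLinearGroup.map reduceTwo g = A ∧ mapPt g '' standardHyperoval = H := by
  choose q q_mem hq using fun j => hH.exists_span_mem_reduceTwo_eq
    (mulVec_ne_zero A (Pi.single_ne_zero_iff.2 one_ne_zero : Pi.single j (1 : ZMod 2) ≠ 0))
  obtain ⟨p, p_mem, hp⟩ := hH.exists_span_mem_reduceTwo_eq (mulVec_ne_zero A one_ne_zero)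
  simp only [mulVec_single_one] at hq
  obtain ⟨g, hgA, g_single, g_one⟩ := exists_generalLinearGroup_map_eq_of_frame reduceTwo A hq hp
  refine ⟨g, hgA, ?_⟩
  have image_frame_subset : mapPt g '' standardFrame R4 (Fin 3) ⊆ H := by
    rintro _ ⟨_, rfl | ⟨j, rfl⟩, rfl⟩
    · rwa [mapPt, map_mulVecLin_span_singleton, g_one]
    · obtain ⟨c, hc, hcj⟩ := g_single j
      rw [mapPt, map_mulVecLin_span_singleton, hcj, Submodule.span_singleton_smul_eq hc]
      exact q_mem j
  rw [← image_mapPt_inv_eq_iff]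
  refine (hH.image_map_mulVecLin g⁻¹).eq_standardHyperoval ?_
  rw [← image_mapPt_inv_eq_iff.2 (rfl : mapPt g '' standardFrame R4 (Fin 3) = _)]
  exact Set.image_mono image_frame_subset

theorem mem_pmOne_of_standardFrame_subset (hH : IsHyperoval H)
    (hF : standardFrame R4 (Fin 3) ⊆ H) {g : GL3} (hg : GeneralLinearGroup.map reduceTwo g = 1)
    (hgH : mapPt g '' H = H) : g ∈ pmOne := by
  have mulVec_mem_span {x : Fin 3 → R4} (hx : R4 ∙ x ∈ H) (hx0 : reduceTwo ∘ x ≠ 0) :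
      g.1 *ᵥ x ∈ R4 ∙ x := by
    have gx_mem : R4 ∙ (g.1 *ᵥ x) ∈ H := by
      rw [← map_mulVecLin_span_singleton, ← hgH]
      exact Set.mem_image_of_mem _ hx
    have gx_reduce : reduceTwo ∘ x = reduceTwo ∘ (g.1 *ᵥ x) := by
      rw [ringHom_comp_mulVec, hg, Units.val_one, one_mulVec]
    rw [hH.span_eq_span_of_reduceTwo_eq hx gx_mem hx0 gx_reduce]
    exact Submodule.mem_span_singleton_self _
  have single_ne_zero : ∀ j : Fin 3, reduceTwo ∘ Pi.single j 1 ≠ 0 := by decide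
  obtain ⟨c, hc⟩ := exists_eq_scalar_of_mulVec_mem_span
    (fun j => mulVec_mem_span (hF (Set.mem_insert_of_mem _ ⟨j, rfl⟩)) (single_ne_zero j))
    (mulVec_mem_span (hF (Set.mem_insert _ _)) (by decide))
  exact mem_pmOne_of_eq_scalar hc

theorem mem_pmOne_of_map_reduceTwo_eq_one (hH : IsHyperoval H) {g : GL3}
    (hg : GeneralLinearGroup.map reduceTwo g = 1) (hgH : mapPt g '' H = H) : g ∈ pmOne := by
  obtain ⟨f, -, hf⟩ := hH.exists_image_mapPt_standardHyperoval_eq 1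
  have hf' : mapPt f⁻¹ '' H = standardHyperoval := image_mapPt_inv_eq_iff.2 hf
  have hyperoval : IsHyperoval standardHyperoval := hf' ▸ hH.image_map_mulVecLin f⁻¹
  have conj_mem : f⁻¹ * g * f ∈ pmOne :=
    hyperoval.mem_pmOne_of_standardFrame_subset Set.subset_union_left (by simp [hg])
      (by rw [image_mapPt_mul, image_mapPt_mul, hf, hgH, hf'])
  have conj_conj_mem : f * (f⁻¹ * g * f) * f⁻¹ ∈ pmOne :=
    Subgroup.Normal.conj_mem inferInstance _ conj_mem f
  simpa [mul_assoc] using conj_conj_mem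

theorem bijective_reducePGL_stabilizer (hH : IsHyperoval H) :
    Function.Bijective fun g : {g : PGL3 // pglMapSet g H = H} => reducePGL g := by
  constructor
  · rintro ⟨g, hg⟩ ⟨g', hg'⟩ hgg'
    induction g using QuotientGroup.induction_on with | H g
    induction g' using QuotientGroup.induction_on with | H g'
    have map_eq : GeneralLinearGroup.map reduceTwo g = GeneralLinearGroup.map reduceTwo g' := hgg'
    refine Subtype.ext (QuotientGroup.eq.2 (hH.mem_pmOne_of_map_reduceTwo_eq_one ?_ ?_))
    · rw [map_mul, map_inv, map_eq, inv_mul_cancel]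
    · rw [image_mapPt_mul, image_mapPt_inv_eq_iff]
      exact hg.trans hg'.symm
  · intro A
    obtain ⟨f, hfA, hf⟩ := hH.exists_image_mapPt_standardHyperoval_eq A
    obtain ⟨e, he1, he⟩ := hH.exists_image_mapPt_standardHyperoval_eq 1
    refine ⟨⟨(f * e⁻¹ : GL3), ?_⟩, ?_⟩
    · exact (image_mapPt_mul f e⁻¹ H).trans (by rw [image_mapPt_inv_eq_iff.2 he, hf])
    · exact (map_mul (GeneralLinearGroup.map reduceTwo) f e⁻¹).trans (by simp [hfA, he1])

end ZModFour

end IsHyperoval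

/-- The setwise stabilizer in PGL(3, ℤ/4ℤ) of any hyperoval of PHG(2, ℤ/4ℤ)
has order 168. -/
theorem hyperoval_stabilizer_card :
    ∀ H : Set (Submodule R4 (Fin 3 → R4)), IsHyperoval H →
      Nat.card {g : PGL3 // pglMapSet g H = H} = 168 := by
  intro H hH
  rw [Nat.card_eq_of_bijective _ hH.bijective_reducePGL_stabilizer, card_GL_field]
  simp [Fin.prod_univ_three]
end
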